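/- Let ξ(a) = 1/(a² e^a Γ(-2,a)) where Γ(-2,a) = ∫_a^∞ t^{-3} e^{-t} dt. Then ξ(a)/a → 1 as a → ∞. -/

import Mathlib

open MeasureTheory Real Filter

/-!
Substituting `t = s + a` gives, for `a > 0`,
`a ^ 3 * exp a * ∫ t in Ioi a, t ^ (-3) * exp (-t) = ∫ s in Ioi 0, (1 + s / a) ^ (-3) * exp (-s)`,
and the left-hand side is the reciprocal of `ξ(a) / a`. The integrand on the right is dominated
by `exp (-s)` and converges pointwise to it as `a → ∞`, so by dominated convergence the integral
tends to `∫ s in Ioi 0, exp (-s) = 1`.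
-/

lemma cube_mul_exp_mul_integral_eq {a : ℝ} (ha : 0 < a) :
    a ^ 3 * Real.exp a * ∫ t in Set.Ioi a, t ^ (-3 : ℝ) * Real.exp (-t) =
      ∫ s in Set.Ioi (0 : ℝ), (1 + s / a) ^ (-3 : ℝ) * Real.exp (-s) := by
  have hshift := (measurePreserving_add_right (volume : Measure ℝ) a).setIntegral_preimage_emb
    (measurableEmbedding_addRight a) (fun t : ℝ => t ^ (-3 : ℝ) * Real.exp (-t)) (Set.Ioi a)
  rw [Set.preimage_add_const_Ioi, sub_self] at hshift
  rw [← hshift, ← integral_const_mul]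
  refine setIntegral_congr_fun measurableSet_Ioi fun s hs => ?_
  have hs : 0 < s := hs
  have hfac : s + a = a * (1 + s / a) := by field_simp; ring
  have hexp : Real.exp (-(s + a)) = Real.exp (-s) * (Real.exp a)⁻¹ := by
    rw [neg_add, Real.exp_add, Real.exp_neg a]
  have hcube : a ^ (-3 : ℝ) = (a ^ 3)⁻¹ := by
    rw [Real.rpow_neg ha.le]
    norm_cast
  have hpow : (s + a) ^ (-3 : ℝ) = (a ^ 3)⁻¹ * (1 + s / a) ^ (-3 : ℝ) := by
    rw [hfac, Real.mul_rpow ha.le (by positivity), hcube]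
  have hne : Real.exp a ≠ 0 := Real.exp_ne_zero a
  simp only [hexp, hpow]
  field_simp

lemma tendsto_integral_one_add_div :
    Tendsto (fun a : ℝ => ∫ s in Set.Ioi (0 : ℝ), (1 + s / a) ^ (-3 : ℝ) * Real.exp (-s))
      atTop (nhds 1) := by
  suffices h : Tendsto (fun a : ℝ => ∫ s in Set.Ioi (0 : ℝ), (1 + s / a) ^ (-3 : ℝ) * Real.exp (-s))
      atTop (nhds (∫ s in Set.Ioi (0 : ℝ), Real.exp (-s))) by
    rwa [integral_exp_neg_Ioi_zero] at h
  refine tendsto_integral_filter_of_dominated_convergence (fun s => Real.exp (-s)) ?_ ?_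
    (integrableOn_exp_neg_Ioi 0) ?_
  · refine Eventually.of_forall fun a => Measurable.aestronglyMeasurable ?_
    fun_prop
  · filter_upwards [eventually_gt_atTop 0] with a ha
    filter_upwards [ae_restrict_mem measurableSet_Ioi] with s hs
    have hs : 0 < s := hs
    have hbase : 1 ≤ 1 + s / a := le_add_of_nonneg_right (by positivity)
    rw [Real.norm_of_nonneg (by positivity)]
    exact mul_le_of_le_one_left (Real.exp_pos _).le
      (Real.rpow_le_one_of_one_le_of_nonpos hbase (by norm_num))
  · refine Eventually.of_forall fun s => ?_
    have hbase : Tendsto (fun a : ℝ => 1 + s / a) atTop (nhds 1) := by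
      simpa using (tendsto_const_nhds (x := s)).div_atTop tendsto_id |>.const_add 1
    simpa using (hbase.rpow_const (p := (-3 : ℝ)) (Or.inl one_ne_zero)).mul_const (Real.exp (-s))

/-- ξ(a) = 1/(a² e^a Γ(-2,a)) with Γ(-2,a) = ∫_a^∞ t^{-3} e^{-t} dt satisfies ξ(a)/a → 1
as a → ∞. -/
theorem xi_div_self_tendsto_one :
    Tendsto (fun a : ℝ =>
        (1 / (a ^ 2 * Real.exp a * ∫ t in Set.Ioi a, t ^ (-3 : ℝ) * Real.exp (-t))) / a)
      atTop (nhds 1) := by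
  have hinv := tendsto_integral_one_add_div.inv₀ one_ne_zero
  rw [inv_one] at hinv
  refine hinv.congr' ?_
  filter_upwards [eventually_gt_atTop 0] with a ha
  rw [← cube_mul_exp_mul_integral_eq ha, div_div, one_div]
  congr 1
  ring
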